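/- arXiv:2103.12008 — 2 statements merged into one kernel-verified Lean document; each statement's English description precedes it below -/
import Mathlib

section
/- Suppose S[ω] and S[μ] are integrally closed. Then (P^{(p−1)})^* = (A :_K P^{(p−1)}) equals the S-submodule of K generated by T := T₁ ∪ T₂, where T₁ := {(ω−h₁)^i (μ−h₂)^j : 0 ≤ i,j ≤ p−1, i+j < p} and T₂ := {p^{−1} (ω−h₁)^i (μ−h₂)^j : 0 ≤ i,j ≤ p−1, i+j ≥ p}. -/
/-- A height one prime ideal of a commutative ring. -/
def IsHeightOnePrime {S : Type*} [CommRing S] (P : Ideal S) : Prop :=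
  ∃ hP : P.IsPrime, Order.height (⟨P, hP⟩ : PrimeSpectrum S) = 1

/-- `c ∈ S` is square free if `P S_P = c S_P` for every height one prime `P` containing `c`. -/
def PaperSquarefree {S : Type*} [CommRing S] (c : S) : Prop :=
  ∀ (P : Ideal S) (hP : P.IsPrime), Order.height (⟨P, hP⟩ : PrimeSpectrum S) = 1 → c ∈ P →
    haveI := hP
    Ideal.map (algebraMap S (Localization.AtPrime P)) P =
      Ideal.span {algebraMap S (Localization.AtPrime P) c}

/-- Two elements satisfy `𝒜₁` if no height one prime contains both of them. -/
def SatisfiesA1 {S : Type*} [CommRing S] (f g : S) : Prop :=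
  ∀ P : Ideal S, IsHeightOnePrime P → ¬(f ∈ P ∧ g ∈ P)

/-- The depth of a module over a local ring: the supremum of the lengths of
regular sequences on `M` contained in the maximal ideal. -/
noncomputable def modDepth (S : Type*) [CommRing S] [IsLocalRing S]
    (M : Type*) [AddCommGroup M] [Module S M] : ℕ∞ :=
  sSup {n : ℕ∞ | ∃ rs : List S, (rs.length : ℕ∞) = n ∧
    (∀ r ∈ rs, r ∈ IsLocalRing.maximalIdeal S) ∧ RingTheory.Sequence.IsRegular M rs}

/-- A commutative ring is Cohen-Macaulay if each of its localizations at a prime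
has depth equal to its Krull dimension. -/
def IsCMRing (R : Type*) [CommRing R] : Prop :=
  ∀ (Q : Ideal R) (hQ : Q.IsPrime),
    haveI := hQ
    (modDepth (Localization.AtPrime Q) (Localization.AtPrime Q) : WithBot ℕ∞) =
      ringKrullDim (Localization.AtPrime Q)

/-- The `n`-th symbolic power of a prime ideal `P`, i.e. `Pⁿ A_P ∩ A`. -/
noncomputable def symbPow {A : Type*} [CommRing A] (P : Ideal A) (hP : P.IsPrime) (n : ℕ) :
    Ideal A :=
  haveI := hP
  Ideal.comap (algebraMap A (Localization.AtPrime P))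
    (Ideal.map (algebraMap A (Localization.AtPrime P)) (P ^ n))

/-- `ω`, as an element of the subalgebra `A = S[ω,μ]`. -/
noncomputable def omegaA {S : Type*} [CommRing S] {K : Type*} [Field K] [Algebra S K]
    (ω μ : K) : Algebra.adjoin S ({ω, μ} : Set K) :=
  ⟨ω, Algebra.subset_adjoin (Set.mem_insert _ _)⟩

/-- `μ`, as an element of the subalgebra `A = S[ω,μ]`. -/
noncomputable def muA {S : Type*} [CommRing S] {K : Type*} [Field K] [Algebra S K]
    (ω μ : K) : Algebra.adjoin S ({ω, μ} : Set K) :=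
  ⟨μ, Algebra.subset_adjoin (Set.mem_insert_of_mem _ rfl)⟩

/-- The ideal `P = (p, ω−h₁, μ−h₂)` of `A = S[ω,μ]`. -/
noncomputable def Pid {S : Type*} [CommRing S] {K : Type*} [Field K] [Algebra S K]
    (p : ℕ) (ω μ : K) (h₁ h₂ : S) : Ideal (Algebra.adjoin S ({ω, μ} : Set K)) :=
  Ideal.span {(p : Algebra.adjoin S ({ω, μ} : Set K)),
    omegaA ω μ - algebraMap S _ h₁, muA ω μ - algebraMap S _ h₂}

/-- The colon module `(A :_K N) = {x ∈ K : x·N ⊆ A}`, as an `S`-submodule of `K`. -/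
noncomputable def colonSubmodule (S : Type*) [CommRing S] (K : Type*) [Field K] [Algebra S K]
    (A : Subalgebra S K) (N : Set K) : Submodule S K where
  carrier := {x : K | ∀ z ∈ N, x * z ∈ A}
  add_mem' := fun hx hy z hz => by
    simpa [add_mul] using add_mem (hx z hz) (hy z hz)
  zero_mem' := fun z hz => by simpa using A.zero_mem
  smul_mem' := fun c x hx z hz => by
    rw [Algebra.smul_def, mul_assoc]
    exact mul_mem (A.algebraMap_mem c) (hx z hz)

/-- `M` admits a free resolution `0 → Sⁿ → Sᵐ → M → 0`; for a finitely generated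
module over a Noetherian local ring this says exactly `pd_S(M) ≤ 1`. -/
def HasFreeResLengthLE1 (S : Type*) [CommRing S] (M : Type*) [AddCommGroup M] [Module S M] :
    Prop :=
  ∃ (n m : ℕ) (φ : (Fin n → S) →ₗ[S] (Fin m → S)) (ψ : (Fin m → S) →ₗ[S] M),
    Function.Injective φ ∧ Function.Surjective ψ ∧ LinearMap.range φ = LinearMap.ker ψ

/-- The ideal `Q` contains an `S`-regular sequence of length three, i.e. `Q` has grade
(at least) three. -/
def ContainsRegSeq3 (S : Type*) [CommRing S] (Q : Ideal S) : Prop :=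
  ∃ rs : List S, rs.length = 3 ∧ (∀ r ∈ rs, r ∈ Q) ∧ RingTheory.Sequence.IsRegular S rs

/-!
Put `x = ω - h₁` and `y = μ - h₂`. Modulo `p` we have `xᵖ ≡ ωᵖ - h₁ᵖ = ap ≡ 0`, and likewise
`yᵖ ≡ 0`, so `A / pA` is the truncated polynomial ring `(S / pS)[X, Y] / (Xᵖ, Yᵖ)`. There the
coefficient of `Xᵖ⁻¹Yᵖ⁻¹` in a product is a pairing for which the monomial `XⁱYʲ` is dual to
`Xᵖ⁻¹⁻ⁱYᵖ⁻¹⁻ʲ`.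

In fact `xᵖ = p (a - x r)` with `r ∈ A`. If `S[ω]` is integrally closed, then `p ∤ a`, as otherwise
`xᵖ⁻¹ / p` would be integral over `S[ω]` without lying in it. So `p ∈ P⁽ᵖ⁻¹⁾`, and every `w` in the
colon module satisfies `p w = ∑ cᵢⱼ xⁱ yʲ` with `cᵢⱼ ∈ S`. For `i + j < p` the monomial
`xᵖ⁻¹⁻ⁱ yᵖ⁻¹⁻ʲ` lies in `Pᵖ⁻¹`, so its product with `p w` vanishes modulo `p` and the pairing gives
`p ∣ cᵢⱼ`. Conversely `P²ᵖ⁻¹ ⊆ pA` and `pA` is `P`-primary, so for `i + j ≥ p` the product of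
`xⁱ yʲ` with `P⁽ᵖ⁻¹⁾` lies in `pA`.
-/

section IntegrallyClosed

theorem dvd_of_sq_add_mul_eq_sq_mul {R : Type*} [CommRing R] [IsDomain R] [IsIntegrallyClosed R]
    {u t r c : R} (ht : t ≠ 0) (h : u ^ 2 + t * r * u = t ^ 2 * c) : t ∣ u := by
  have ht' : algebraMap R (FractionRing R) t ≠ 0 := by simpa using ht
  have hint : IsIntegral R (algebraMap R (FractionRing R) u / algebraMap R (FractionRing R) t) := by
    refine ⟨.X ^ 2 + .C r * .X - .C c, by monicity!, ?_⟩
    have h' := congrArg (algebraMap R (FractionRing R)) h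
    simp only [map_add, map_mul, map_pow] at h'
    simp only [Polynomial.eval₂_sub, Polynomial.eval₂_add, Polynomial.eval₂_mul,
      Polynomial.eval₂_pow, Polynomial.eval₂_X, Polynomial.eval₂_C]
    field_simp
    linear_combination h'
  obtain ⟨v, hv⟩ := IsIntegrallyClosed.algebraMap_eq_of_integral hint
  refine ⟨v, IsFractionRing.injective R (FractionRing R) ?_⟩
  rw [map_mul, hv, mul_div_cancel₀ _ ht']

variable {S R : Type*} [CommRing S] [CommRing R] [Algebra S R] {p : ℕ} {h a : S} {w : R}

theorem exists_sub_algebraMap_pow_prime_eq (hp : p.Prime)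
    (hw : w ^ p = algebraMap S R (h ^ p + a * p)) :
    ∃ r, (w - algebraMap S R h) ^ p =
      algebraMap S R p * (algebraMap S R a - (w - algebraMap S R h) * r) := by
  obtain ⟨r, hr⟩ := exists_add_pow_prime_eq hp (w - algebraMap S R h) (algebraMap S R h)
  rw [sub_add_cancel, hw, map_add, map_mul, map_pow, map_natCast] at hr
  rw [map_natCast]
  exact ⟨algebraMap S R h * r, by linear_combination -hr⟩

theorem algebraMap_dvd_sub_algebraMap_pow_pred [IsDomain R] [IsIntegrallyClosed R] (hp : p.Prime)
    (hpR : algebraMap S R p ≠ 0) (hw : w ^ p = algebraMap S R (h ^ p + a * p)) (ha : (p : S) ∣ a) :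
    algebraMap S R p ∣ (w - algebraMap S R h) ^ (p - 1) := by
  obtain ⟨c, rfl⟩ := ha
  obtain ⟨r, hr⟩ := exists_sub_algebraMap_pow_prime_eq hp hw
  obtain ⟨n, rfl⟩ := Nat.exists_eq_add_of_le' hp.two_le
  rw [map_mul] at hr
  rw [show n + 2 - 1 = n + 1 from rfl]
  refine dvd_of_sq_add_mul_eq_sq_mul (r := r)
    (c := (w - algebraMap S R h) ^ n * algebraMap S R c) hpR ?_
  linear_combination (w - algebraMap S R h) ^ n * hr

end IntegrallyClosed

section Ideal

variable {A : Type*} [CommRing A]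

theorem sup_pow_le_of_pow_le {I J Z : Ideal A} {m n k : ℕ} (hI : I ^ m ≤ Z) (hJ : J ^ n ≤ Z)
    (hk : m + n ≤ k + 1) : (I ⊔ J) ^ k ≤ Z := by
  rw [← Submodule.add_eq_sup, add_pow, Ideal.sum_eq_sup, Finset.sup_le_iff]
  intro i hi
  refine Ideal.mul_le_left.trans ?_
  obtain h | h : m ≤ i ∨ n ≤ k - i := by
    rw [Finset.mem_range] at hi
    omega
  · exact Ideal.mul_le_left.trans ((Ideal.pow_le_pow_right h).trans hI)
  · exact Ideal.mul_le_right.trans ((Ideal.pow_le_pow_right h).trans hJ)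

theorem mem_symbPow_iff {P : Ideal A} {hP : P.IsPrime} {n : ℕ} {z : A} :
    z ∈ symbPow P hP n ↔ ∃ m ∉ P, m * z ∈ P ^ n := by
  rw [symbPow, Ideal.mem_comap, IsLocalization.algebraMap_mem_map_algebraMap_iff P.primeCompl]
  rfl

theorem pow_le_symbPow {P : Ideal A} {hP : P.IsPrime} {n : ℕ} : P ^ n ≤ symbPow P hP n :=
  Ideal.le_comap_map

theorem pow_mul_pow_mem_pow_add {I : Ideal A} {x y : A} (hx : x ∈ I) (hy : y ∈ I) (i j : ℕ) :
    x ^ i * y ^ j ∈ I ^ (i + j) := by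
  rw [pow_add]
  exact Ideal.mul_mem_mul (Ideal.pow_mem_pow hx i) (Ideal.pow_mem_pow hy j)

end Ideal

section Basis

variable {S A ι : Type*} [CommRing S] [CommRing A] [Algebra S A]

theorem algebraMap_dvd_iff_forall_dvd_repr [Finite ι] (b : Module.Basis ι S A) {s : S} {u : A} :
    algebraMap S A s ∣ u ↔ ∀ i, s ∣ b.repr u i := by
  constructor
  · rintro ⟨v, rfl⟩ i
    exact ⟨b.repr v i, by simp [← Algebra.smul_def]⟩
  · intro h
    have := Fintype.ofFinite ι
    choose c hc using h
    refine ⟨∑ i, c i • b i, ?_⟩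
    rw [← Algebra.smul_def, Finset.smul_sum]
    simp_rw [smul_smul, ← hc, b.sum_repr]

theorem not_algebraMap_dvd_basis [Finite ι] (b : Module.Basis ι S A) {s : S} (hs : ¬IsUnit s)
    (i : ι) : ¬algebraMap S A s ∣ b i := by
  intro h
  refine hs (isUnit_of_dvd_one ?_)
  simpa using (algebraMap_dvd_iff_forall_dvd_repr b).1 h i

theorem algebraMap_dvd_of_dvd_algebraMap_mul [Finite ι] (b : Module.Basis ι S A) {q s : S}
    (hq : Prime q) (hs : ¬q ∣ s) {u : A} (h : algebraMap S A q ∣ algebraMap S A s * u) :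
    algebraMap S A q ∣ u := by
  rw [algebraMap_dvd_iff_forall_dvd_repr b] at h ⊢
  intro i
  refine (hq.dvd_or_dvd ?_).resolve_left hs
  simpa [← Algebra.smul_def] using h i

end Basis

/-- The elements `xⁱ yʲ` with `i, j < n` form the basis `b` of `A` over `S`, and `q` divides `xⁿ`
and `yⁿ`. This encodes that `A / qA` is the truncated polynomial ring `(S / qS)[X, Y] / (Xⁿ, Yⁿ)`,
with a chosen lift of its monomial basis. -/
structure IsTruncatedMonomialBasis {S A : Type*} [CommRing S] [CommRing A] [Algebra S A] {n : ℕ}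
    (q : S) (x y : A) (b : Module.Basis (Fin n × Fin n) S A) : Prop where
  basis_apply : ∀ i j, b (i, j) = x ^ (i : ℕ) * y ^ (j : ℕ)
  dvd_left_pow : algebraMap S A q ∣ x ^ n
  dvd_right_pow : algebraMap S A q ∣ y ^ n

namespace IsTruncatedMonomialBasis

section Ring

variable {S A : Type*} [CommRing S] [CommRing A] [Algebra S A] {n : ℕ} {q : S} {x y : A}
  {b : Module.Basis (Fin n × Fin n) S A}

theorem not_dvd_pow_pred (hb : IsTruncatedMonomialBasis q x y b) (hn : 0 < n) (hq : ¬IsUnit q) :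
    ¬algebraMap S A q ∣ x ^ (n - 1) := by
  have := not_algebraMap_dvd_basis b hq (⟨n - 1, by omega⟩, ⟨0, hn⟩)
  simpa only [hb.basis_apply, pow_zero, mul_one] using this

theorem span_pow_le (hb : IsTruncatedMonomialBasis q x y b) :
    Ideal.span {algebraMap S A q, x, y} ^ (2 * n - 1) ≤ Ideal.span {algebraMap S A q} := by
  have hx : Ideal.span {x} ^ n ≤ Ideal.span {algebraMap S A q} := by
    rw [Ideal.span_singleton_pow, Ideal.span_singleton_le_span_singleton]
    exact hb.dvd_left_pow
  have hy : Ideal.span {y} ^ n ≤ Ideal.span {algebraMap S A q} := by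
    rw [Ideal.span_singleton_pow, Ideal.span_singleton_le_span_singleton]
    exact hb.dvd_right_pow
  rw [Ideal.span_insert, Ideal.span_insert]
  exact sup_pow_le_of_pow_le (pow_one _).le
    (sup_pow_le_of_pow_le (k := 2 * n - 1) hx hy (by omega)) (by omega)

theorem exists_sub_algebraMap_mem (hb : IsTruncatedMonomialBasis q x y b) (u : A) :
    ∃ s, u - algebraMap S A s ∈ Ideal.span {algebraMap S A q, x, y} := by
  set P := Ideal.span {algebraMap S A q, x, y}
  have hx : x ∈ P := Ideal.subset_span (by simp)
  have hy : y ∈ P := Ideal.subset_span (by simp)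
  suffices h : ⊤ ≤ 1 ⊔ P.restrictScalars S by
    obtain ⟨_, hs, v, hv, rfl⟩ := Submodule.mem_sup.1 (h (Submodule.mem_top (x := u)))
    obtain ⟨s, rfl⟩ := Submodule.mem_one.1 hs
    exact ⟨s, by simpa using hv⟩
  rw [← b.span_eq, Submodule.span_le]
  rintro _ ⟨⟨i, j⟩, rfl⟩
  rw [hb.basis_apply]
  by_cases hi : (i : ℕ) = 0
  · by_cases hj : (j : ℕ) = 0
    · exact Submodule.mem_sup_left (Submodule.mem_one.2 ⟨1, by simp [hi, hj]⟩)
    · exact Submodule.mem_sup_right (P.mul_mem_left _ (P.pow_mem_of_mem hy _ (by omega)))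
  · exact Submodule.mem_sup_right (P.mul_mem_right _ (P.pow_mem_of_mem hx _ (by omega)))

theorem dvd_of_algebraMap_mem (hb : IsTruncatedMonomialBasis q x y b) (hn : 0 < n) (hq : Prime q)
    {s : S} (hs : algebraMap S A s ∈ Ideal.span {algebraMap S A q, x, y}) : q ∣ s := by
  have hpow := hb.span_pow_le (Ideal.pow_mem_pow hs (2 * n - 1))
  rw [Ideal.mem_span_singleton, ← map_pow] at hpow
  by_contra hqs
  refine not_algebraMap_dvd_basis b hq.not_isUnit (⟨0, hn⟩, ⟨0, hn⟩)
    (algebraMap_dvd_of_dvd_algebraMap_mul b hq (fun h ↦ hqs (hq.dvd_of_dvd_pow h))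
      (hpow.mul_right _))

theorem dvd_of_dvd_mul (hb : IsTruncatedMonomialBasis q x y b) (hq : Prime q) {m u : A}
    (hm : m ∉ Ideal.span {algebraMap S A q, x, y}) (h : algebraMap S A q ∣ m * u) :
    algebraMap S A q ∣ u := by
  set P := Ideal.span {algebraMap S A q, x, y}
  obtain ⟨s, hs⟩ := hb.exists_sub_algebraMap_mem m
  have hqs : ¬q ∣ s := by
    rintro ⟨d, rfl⟩
    refine hm ((Submodule.sub_mem_iff_left _ ?_).1 hs)
    rw [map_mul]
    exact P.mul_mem_right _ (Ideal.subset_span (by simp))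
  -- `P / qA` is nilpotent, so `m` divides a power of `s` modulo `q`.
  obtain ⟨d, hd⟩ : m ∣ algebraMap S A s ^ (2 * n - 1) - (algebraMap S A s - m) ^ (2 * n - 1) := by
    simpa using sub_dvd_pow_sub_pow (algebraMap S A s) (algebraMap S A s - m) (2 * n - 1)
  have hnil : algebraMap S A q ∣ (algebraMap S A s - m) ^ (2 * n - 1) := by
    rw [← Ideal.mem_span_singleton]
    exact hb.span_pow_le (Ideal.pow_mem_pow (by rw [← neg_sub]; exact P.neg_mem hs) _)
  refine algebraMap_dvd_of_dvd_algebraMap_mul b (s := s ^ (2 * n - 1)) hq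
    (fun h ↦ hqs (hq.dvd_of_dvd_pow h)) ?_
  rw [map_pow, show algebraMap S A s ^ (2 * n - 1) * u =
    d * (m * u) + (algebraMap S A s - m) ^ (2 * n - 1) * u by linear_combination u * hd]
  exact dvd_add (h.mul_left _) (hnil.mul_right _)

theorem dvd_repr_mul_sub_repr (hb : IsTruncatedMonomialBasis q x y b) {i j : Fin n} {k l : ℕ}
    (hi : i + k < n) (hj : j + l < n) (u : A) :
    q ∣ b.repr (x ^ k * y ^ l * u) (⟨i + k, hi⟩, ⟨j + l, hj⟩) - b.repr u (i, j) := by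
  let Q := Ideal.span {q}
  suffices h : Q.mkQ ∘ₗ b.coord (⟨i + k, hi⟩, ⟨j + l, hj⟩) ∘ₗ LinearMap.mulLeft S (x ^ k * y ^ l) =
      Q.mkQ ∘ₗ b.coord (i, j) by
    have hu := LinearMap.congr_fun h u
    rwa [← Ideal.mem_span_singleton, ← Submodule.Quotient.eq]
  refine b.ext fun ⟨i', j'⟩ ↦ (Submodule.Quotient.eq _).2 (Ideal.mem_span_singleton.2 ?_)
  simp only [LinearMap.comp_apply, LinearMap.mulLeft_apply, Module.Basis.coord_apply]
  by_cases hlt : i' + k < n ∧ j' + l < n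
  · have hmul : x ^ k * y ^ l * b (i', j') = b (⟨i' + k, hlt.1⟩, ⟨j' + l, hlt.2⟩) := by
      simp only [hb.basis_apply]
      ring
    simp [hmul, Finsupp.single_apply, Fin.ext_iff]
  · have hne : (i', j') ≠ (i, j) := by
      rintro ⟨⟩
      exact hlt ⟨hi, hj⟩
    have hdvd : algebraMap S A q ∣ x ^ k * y ^ l * b (i', j') := by
      rw [hb.basis_apply, show x ^ k * y ^ l * (x ^ (i' : ℕ) * y ^ (j' : ℕ)) =
        x ^ (i' + k) * y ^ (j' + l) by ring]
      obtain h | h : n ≤ i' + k ∨ n ≤ j' + l := by omega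
      · exact (hb.dvd_left_pow.trans (pow_dvd_pow x h)).mul_right _
      · exact (hb.dvd_right_pow.trans (pow_dvd_pow y h)).mul_left _
    simpa [Finsupp.single_apply, hne] using (algebraMap_dvd_iff_forall_dvd_repr b).1 hdvd _

theorem dvd_repr_of_dvd_mul (hb : IsTruncatedMonomialBasis q x y b) {i j : Fin n} {k l : ℕ}
    (hi : i + k < n) (hj : j + l < n) {u : A} (hu : algebraMap S A q ∣ x ^ k * y ^ l * u) :
    q ∣ b.repr u (i, j) :=
  (dvd_sub_right ((algebraMap_dvd_iff_forall_dvd_repr b).1 hu _)).1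
    (hb.dvd_repr_mul_sub_repr hi hj u)

theorem algebraMap_mem_symbPow (hb : IsTruncatedMonomialBasis q x y b) (hn : 0 < n) (hq : Prime q)
    (hP : (Ideal.span {algebraMap S A q, x, y}).IsPrime) {z r : A} {a : S}
    (hz : z ∈ Ideal.span {algebraMap S A q, x, y})
    (hzn : z ^ n = algebraMap S A q * (algebraMap S A a - z * r)) (ha : ¬q ∣ a) :
    algebraMap S A q ∈ symbPow (Ideal.span {algebraMap S A q, x, y}) hP (n - 1) := by
  refine mem_symbPow_iff.2 ⟨algebraMap S A a - z * r, fun h ↦ ha ?_, ?_⟩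
  · exact hb.dvd_of_algebraMap_mem hn hq
      ((Submodule.sub_mem_iff_left _ (Ideal.mul_mem_right r _ hz)).1 h)
  · rw [mul_comm, ← hzn]
    exact Ideal.pow_le_pow_right (by omega) (Ideal.pow_mem_pow hz n)

theorem dvd_pow_mul_pow_mul (hb : IsTruncatedMonomialBasis q x y b) (hq : Prime q)
    {hP : (Ideal.span {algebraMap S A q, x, y}).IsPrime} {i j : ℕ} (hij : n ≤ i + j) {z : A}
    (hz : z ∈ symbPow (Ideal.span {algebraMap S A q, x, y}) hP (n - 1)) :
    algebraMap S A q ∣ x ^ i * y ^ j * z := by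
  obtain ⟨m, hm, hmz⟩ := mem_symbPow_iff.1 hz
  refine hb.dvd_of_dvd_mul hq hm ?_
  rw [← Ideal.mem_span_singleton, mul_left_comm]
  refine hb.span_pow_le (Ideal.pow_le_pow_right (?_ : _ ≤ i + j + (n - 1)) ?_)
  · omega
  · rw [pow_add]
    exact Ideal.mul_mem_mul (pow_mul_pow_mem_pow_add
      (Ideal.subset_span (by simp)) (Ideal.subset_span (by simp)) i j) hmz

end Ring

section Colon

variable {S K : Type*} [CommRing S] [Field K] [Algebra S K] {A : Subalgebra S K} {n : ℕ} {q : S}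
  {x y : A} {b : Module.Basis (Fin n × Fin n) S A}

theorem inv_mul_pow_mul_pow_mem_colonSubmodule (hb : IsTruncatedMonomialBasis q x y b)
    (hq : Prime q) (hqK : algebraMap S K q ≠ 0)
    {hP : (Ideal.span {algebraMap S A q, x, y}).IsPrime} {i j : ℕ} (hij : n ≤ i + j) :
    (algebraMap S K q)⁻¹ * ((x : K) ^ i * (y : K) ^ j) ∈ colonSubmodule S K A
      ((↑) '' (symbPow (Ideal.span {algebraMap S A q, x, y}) hP (n - 1) : Set A)) := by
  rintro _ ⟨z, hz, rfl⟩
  obtain ⟨u, hu⟩ := hb.dvd_pow_mul_pow_mul hq hij hz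
  have huK : (x : K) ^ i * (y : K) ^ j * z = algebraMap S K q * u := congrArg Subtype.val hu
  rw [mul_assoc, huK, inv_mul_cancel_left₀ hqK]
  exact u.2

theorem dvd_repr_of_mem_colonSubmodule (hb : IsTruncatedMonomialBasis q x y b)
    {hP : (Ideal.span {algebraMap S A q, x, y}).IsPrime} {w : K}
    (hw : w ∈ colonSubmodule S K A
      ((↑) '' (symbPow (Ideal.span {algebraMap S A q, x, y}) hP (n - 1) : Set A)))
    {v : A} (hv : (v : K) = w * algebraMap S K q) {i j : Fin n} (hij : (i + j : ℕ) < n) :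
    q ∣ b.repr v (i, j) := by
  set m : A := x ^ (n - 1 - i) * y ^ (n - 1 - j)
  have hmem : m ∈ symbPow _ hP (n - 1) :=
    pow_le_symbPow (Ideal.pow_le_pow_right (by omega) (pow_mul_pow_mem_pow_add
      (Ideal.subset_span (by simp)) (Ideal.subset_span (by simp)) (n - 1 - i) (n - 1 - j)))
  refine hb.dvd_repr_of_dvd_mul (k := n - 1 - i) (l := n - 1 - j) (by omega) (by omega)
    ⟨⟨w * m, hw _ ⟨m, hmem, rfl⟩⟩, Subtype.ext ?_⟩
  change (m : K) * v = algebraMap S K q * (w * m)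
  rw [hv]
  ring

theorem eq_sum_repr_smul (hb : IsTruncatedMonomialBasis q x y b) (hqK : algebraMap S K q ≠ 0)
    {w : K} {v : A} (hv : (v : K) = w * algebraMap S K q) :
    w = ∑ ij, b.repr v ij •
      ((algebraMap S K q)⁻¹ * ((x : K) ^ (ij.1 : ℕ) * (y : K) ^ (ij.2 : ℕ))) :=
  calc
    w = (algebraMap S K q)⁻¹ * ((∑ ij, b.repr v ij • b ij : A) : K) := by
      rw [b.sum_repr, hv, mul_comm w, inv_mul_cancel_left₀ hqK]
    _ = _ := by
      simp only [hb.basis_apply, AddSubmonoidClass.coe_finsetSum, SetLike.val_smul,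
        MulMemClass.coe_mul, SubmonoidClass.coe_pow, Finset.mul_sum, mul_smul_comm]

theorem colonSubmodule_symbPow_eq_span (hb : IsTruncatedMonomialBasis q x y b) (hq : Prime q)
    (hqK : algebraMap S K q ≠ 0) (hP : (Ideal.span {algebraMap S A q, x, y}).IsPrime)
    (hqP : algebraMap S A q ∈ symbPow (Ideal.span {algebraMap S A q, x, y}) hP (n - 1)) :
    colonSubmodule S K A
        ((↑) '' (symbPow (Ideal.span {algebraMap S A q, x, y}) hP (n - 1) : Set A)) =
      Submodule.span S
        ({w : K | ∃ i j : ℕ, i ≤ n - 1 ∧ j ≤ n - 1 ∧ i + j < n ∧ w = (x : K) ^ i * (y : K) ^ j} ∪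
         {w : K | ∃ i j : ℕ, i ≤ n - 1 ∧ j ≤ n - 1 ∧ n ≤ i + j ∧
            w = (algebraMap S K q)⁻¹ * ((x : K) ^ i * (y : K) ^ j)}) := by
  refine le_antisymm (fun w hw ↦ ?_) (Submodule.span_le.2 ?_)
  · obtain ⟨v, hv⟩ : ∃ v : A, (v : K) = w * algebraMap S K q := ⟨⟨_, hw _ ⟨_, hqP, rfl⟩⟩, rfl⟩
    rw [hb.eq_sum_repr_smul hqK hv]
    refine Submodule.sum_mem _ fun ⟨i, j⟩ _ ↦ ?_
    by_cases hij : (i + j : ℕ) < n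
    · obtain ⟨c, hc⟩ := hb.dvd_repr_of_mem_colonSubmodule hw hv hij
      rw [hc, mul_comm q, mul_smul, Algebra.smul_def q, mul_inv_cancel_left₀ hqK]
      exact Submodule.smul_mem _ _ (Submodule.subset_span
        (.inl ⟨i, j, by omega, by omega, hij, rfl⟩))
    · exact Submodule.smul_mem _ _ (Submodule.subset_span
        (.inr ⟨i, j, by omega, by omega, by omega, rfl⟩))
  · rintro _ (⟨i, j, -, -, -, rfl⟩ | ⟨i, j, -, -, hij, rfl⟩)
    · rintro _ ⟨z, -, rfl⟩
      exact (x ^ i * y ^ j * z).2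
    · exact hb.inv_mul_pow_mul_pow_mem_colonSubmodule hq hqK hij

end Colon

end IsTruncatedMonomialBasis

section Adjoin

open Polynomial in
theorem adjoin_pair_eq_span_pow_mul_pow {R B : Type*} [CommRing R] [CommRing B] [Algebra R B]
    {x y : B} {f g : R[X]} (hf : f.Monic) (hg : g.Monic) (hx : aeval x f = 0)
    (hy : aeval y g = 0) :
    Subalgebra.toSubmodule (Algebra.adjoin R {x, y}) =
      Submodule.span R (Set.range fun ij : Fin f.natDegree × Fin g.natDegree ↦
        x ^ (ij.1 : ℕ) * y ^ (ij.2 : ℕ)) := by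
  rw [Set.insert_eq, Algebra.adjoin_union_coe_submodule,
    ← Submodule.span_range_natDegree_eq_adjoin hf hx,
    ← Submodule.span_range_natDegree_eq_adjoin hg hy, Submodule.span_mul_span]
  congr 1
  ext z
  simp only [Finset.coe_image, Finset.coe_range, Set.mem_mul, Set.mem_image, Set.mem_Iio,
    exists_exists_and_eq_and, Set.mem_range, Prod.exists, Fin.exists_iff, exists_prop]

theorem adjoin_pair_sub_algebraMap {R B : Type*} [CommRing R] [CommRing B] [Algebra R B] (x y : B)
    (c d : R) : Algebra.adjoin R {x - algebraMap R B c, y - algebraMap R B d} =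
      Algebra.adjoin R {x, y} := by
  refine eq_of_forall_ge_iff fun T ↦ ?_
  simp only [Algebra.adjoin_le_iff, Set.insert_subset_iff, Set.singleton_subset_iff,
    SetLike.mem_coe, sub_eq_add_neg, add_mem_cancel_right (neg_mem (T.algebraMap_mem _))]

open Polynomial in
theorem adjoin_pair_eq_span_sub_pow_mul_sub_pow {R B : Type*} [CommRing R] [CommRing B]
    [Algebra R B] {n : ℕ} (hn : n ≠ 0) {x y : B} {f g : R} (hx : x ^ n = algebraMap R B f)
    (hy : y ^ n = algebraMap R B g) (c d : R) :
    Subalgebra.toSubmodule (Algebra.adjoin R {x, y}) =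
      Submodule.span R (Set.range fun ij : Fin n × Fin n ↦
        (x - algebraMap R B c) ^ (ij.1 : ℕ) * (y - algebraMap R B d) ^ (ij.2 : ℕ)) := by
  nontriviality R
  have hmonic (f c : R) : ((X ^ n - C f).comp (X + C c)).Monic :=
    (monic_X_pow_sub_C f hn).comp_X_add_C c
  have hdeg (f c : R) : ((X ^ n - C f).comp (X + C c)).natDegree = n := by
    rw [← taylor_apply, natDegree_taylor, natDegree_X_pow_sub_C]
  rw [← adjoin_pair_sub_algebraMap x y c d,
    adjoin_pair_eq_span_pow_mul_pow (hmonic f c) (hmonic g d) (by simp [hx]) (by simp [hy]),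
    hdeg, hdeg]

theorem linearIndependent_sub_pow_mul_sub_pow {S L K : Type*} [CommRing S] [Field L] [Algebra S L]
    [FaithfulSMul S L] [Field K] [Algebra L K] [Algebra S K] [IsScalarTower S L K] {n : ℕ}
    (hn : n ≠ 0) {f g : S} {ω μ : K} (hω : ω ^ n = algebraMap S K f)
    (hμ : μ ^ n = algebraMap S K g) (hKgen : Algebra.adjoin L ({ω, μ} : Set K) = ⊤)
    (hdeg : Module.finrank L K = n ^ 2) (c d : S) :
    LinearIndependent S fun ij : Fin n × Fin n ↦
      (ω - algebraMap S K c) ^ (ij.1 : ℕ) * (μ - algebraMap S K d) ^ (ij.2 : ℕ) := by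
  simp only [IsScalarTower.algebraMap_apply S L K] at hω hμ ⊢
  have hspan := adjoin_pair_eq_span_sub_pow_mul_sub_pow hn hω hμ (algebraMap S L c)
    (algebraMap S L d)
  rw [hKgen, Algebra.top_toSubmodule] at hspan
  refine (linearIndependent_of_top_le_span_of_card_eq_finrank hspan.le ?_).restrict_scalars' S
  simp [hdeg, sq]

section Generators

variable {S K : Type*} [CommRing S] [Field K] [Algebra S K] {n : ℕ} {f : S} {ω μ : K}

theorem omegaA_pow (hω : ω ^ n = algebraMap S K f) :
    omegaA (S := S) ω μ ^ n = algebraMap S _ f :=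
  Subtype.ext hω

theorem muA_pow (hμ : μ ^ n = algebraMap S K f) : muA (S := S) ω μ ^ n = algebraMap S _ f :=
  Subtype.ext hμ

end Generators

theorem exists_isTruncatedMonomialBasis_adjoin {S L K : Type*} [CommRing S] [Field L] [Algebra S L]
    [FaithfulSMul S L] [Field K] [Algebra L K] [Algebra S K] [IsScalarTower S L K] {p : ℕ}
    (hp : p.Prime) {h₁ h₂ a b : S} {ω μ : K}
    (hω : ω ^ p = algebraMap S K (h₁ ^ p + a * p)) (hμ : μ ^ p = algebraMap S K (h₂ ^ p + b * p))
    (hKgen : Algebra.adjoin L ({ω, μ} : Set K) = ⊤) (hdeg : Module.finrank L K = p ^ 2) :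
    ∃ B : Module.Basis (Fin p × Fin p) S (Algebra.adjoin S ({ω, μ} : Set K)),
      IsTruncatedMonomialBasis (p : S) (omegaA ω μ - algebraMap S _ h₁)
        (muA ω μ - algebraMap S _ h₂) B := by
  have hspan := adjoin_pair_eq_span_sub_pow_mul_sub_pow hp.ne_zero hω hμ h₁ h₂
  have hli := linearIndependent_sub_pow_mul_sub_pow hp.ne_zero hω hμ hKgen hdeg h₁ h₂
  obtain ⟨r, hr⟩ := exists_sub_algebraMap_pow_prime_eq hp (omegaA_pow (μ := μ) hω)
  obtain ⟨t, ht⟩ := exists_sub_algebraMap_pow_prime_eq hp (muA_pow (ω := ω) hμ)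
  refine ⟨(Module.Basis.span hli).map (LinearEquiv.ofEq _ _ hspan.symm ≪≫ₗ
    Subalgebra.toSubmoduleEquiv _), fun i j ↦ Subtype.ext ?_, ?_, ?_⟩
  · exact (congrArg Subtype.val (Module.Basis.span_apply hli (i, j)) :)
  · exact Dvd.intro _ hr.symm
  · exact Dvd.intro _ ht.symm

theorem not_dvd_of_isIntegrallyClosed_adjoin {S L K : Type*} [CommRing S] [Field L] [Algebra S L]
    [FaithfulSMul S L] [Field K] [Algebra L K] [Algebra S K] [IsScalarTower S L K] {p : ℕ}
    (hp : p.Prime) (hpS : Prime (p : S)) {f g h₁ h₂ a b : S} (hf : f = h₁ ^ p + a * p)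
    (hg : g = h₂ ^ p + b * p) {ω μ : K} (hω : ω ^ p = algebraMap S K f)
    (hμ : μ ^ p = algebraMap S K g) (hKgen : Algebra.adjoin L ({ω, μ} : Set K) = ⊤)
    (hdeg : Module.finrank L K = p ^ 2)
    (hicω : IsIntegrallyClosed (Algebra.adjoin S ({ω} : Set K))) : ¬(p : S) ∣ a := by
  subst hf hg
  intro ha
  obtain ⟨B, hB⟩ := exists_isTruncatedMonomialBasis_adjoin hp hω hμ hKgen hdeg
  have := FaithfulSMul.trans S L K
  have hpK := (map_ne_zero_iff _ (FaithfulSMul.algebraMap_injective S K)).2 hpS.ne_zero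
  have hp0 : algebraMap S (Algebra.adjoin S ({ω} : Set K)) p ≠ 0 :=
    fun h ↦ hpK (congrArg Subtype.val h)
  let ω' : Algebra.adjoin S ({ω} : Set K) := ⟨ω, Algebra.self_mem_adjoin_singleton S ω⟩
  have hω' : ω' ^ p = algebraMap S _ (h₁ ^ p + a * p) := Subtype.ext hω
  have hdvd := algebraMap_dvd_sub_algebraMap_pow_pred hp hp0 hω' ha
  refine hB.not_dvd_pow_pred hp.pos hpS.not_isUnit ?_
  have hle : Algebra.adjoin S {ω} ≤ Algebra.adjoin S {ω, μ} := Algebra.adjoin_mono (by simp)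
  have hincl : Subalgebra.inclusion hle ω' = omegaA ω μ := rfl
  simpa only [map_pow, map_sub, AlgHom.commutes, hincl] using
    map_dvd (Subalgebra.inclusion hle) hdvd

end Adjoin

theorem stmt3_general
    {S : Type*} [CommRing S] {L : Type*} [Field L] [Algebra S L] [FaithfulSMul S L]
    {K : Type*} [Field K] [Algebra L K] [Algebra S K] [IsScalarTower S L K]
    {p : ℕ} (hp : p.Prime) (hpS : Prime ((p : ℕ) : S))
    {f g h₁ h₂ a b : S} (hf : f = h₁ ^ p + a * (p : S)) (hg : g = h₂ ^ p + b * (p : S))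
    (hab : ¬(p : S) ∣ a ∨ ¬(p : S) ∣ b)
    {ω μ : K} (hω : ω ^ p = algebraMap S K f) (hμ : μ ^ p = algebraMap S K g)
    (hKgen : Algebra.adjoin L ({ω, μ} : Set K) = ⊤)
    (hdeg : Module.finrank L K = p ^ 2)
    (hP : (Pid p ω μ h₁ h₂).IsPrime) :
    {x : K | ∀ z ∈ symbPow (Pid p ω μ h₁ h₂) hP (p - 1),
        x * (z : K) ∈ Algebra.adjoin S ({ω, μ} : Set K)} =
      ↑(Submodule.span S
        ({x : K | ∃ i j : ℕ, i ≤ p - 1 ∧ j ≤ p - 1 ∧ i + j < p ∧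
            x = (ω - algebraMap S K h₁) ^ i * (μ - algebraMap S K h₂) ^ j} ∪
         {x : K | ∃ i j : ℕ, i ≤ p - 1 ∧ j ≤ p - 1 ∧ p ≤ i + j ∧
            x = (p : K)⁻¹ * ((ω - algebraMap S K h₁) ^ i * (μ - algebraMap S K h₂) ^ j)})) := by
  subst hf hg
  obtain ⟨B, hB⟩ := exists_isTruncatedMonomialBasis_adjoin hp hω hμ hKgen hdeg
  have hpK : algebraMap S K p ≠ 0 := by
    have := FaithfulSMul.trans S L K
    exact (map_ne_zero_iff _ (FaithfulSMul.algebraMap_injective S K)).2 hpS.ne_zero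
  have hPid : Pid p ω μ h₁ h₂ = Ideal.span {algebraMap S _ (p : S),
      omegaA ω μ - algebraMap S _ h₁, muA ω μ - algebraMap S _ h₂} := by
    rw [map_natCast]
    rfl
  simp only [hPid] at hP ⊢
  have hpP : algebraMap S _ (p : S) ∈ symbPow _ hP (p - 1) := by
    rcases hab with ha | hb
    · obtain ⟨r, hr⟩ := exists_sub_algebraMap_pow_prime_eq hp (omegaA_pow (μ := μ) hω)
      exact hB.algebraMap_mem_symbPow hp.pos hpS hP (z := omegaA ω μ - algebraMap S _ h₁)
        (Ideal.subset_span (by simp)) hr ha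
    · obtain ⟨r, hr⟩ := exists_sub_algebraMap_pow_prime_eq hp (muA_pow (ω := ω) hμ)
      exact hB.algebraMap_mem_symbPow hp.pos hpS hP (z := muA ω μ - algebraMap S _ h₂)
        (Ideal.subset_span (by simp)) hr hb
  have hcolon := congrArg SetLike.coe (hB.colonSubmodule_symbPow_eq_span hpS hpK hP hpP)
  simpa [colonSubmodule, omegaA, muA] using hcolon

theorem stmt3
    {S : Type*} [CommRing S] [IsDomain S] [IsNoetherianRing S] [IsIntegrallyClosed S]
    {L : Type*} [Field L] [CharZero L] [Algebra S L] [IsFractionRing S L]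
    {K : Type*} [Field K] [Algebra L K] [Algebra S K] [IsScalarTower S L K]
    {p : ℕ} (hp : p.Prime) (hp3 : 3 ≤ p) (hpS : Prime ((p : ℕ) : S))
    (hSmodp : IsIntegrallyClosed (S ⧸ Ideal.span {((p : ℕ) : S)}))
    {f g h₁ h₂ a b : S} (hf : f = h₁ ^ p + a * (p : S)) (hg : g = h₂ ^ p + b * (p : S))
    (hfg : (¬IsUnit f ∧ ¬IsUnit g ∧ PaperSquarefree f ∧ PaperSquarefree g ∧ SatisfiesA1 f g) ∨
      (IsUnit f ∧ IsUnit g ∧ (∀ x : S, x ^ p ≠ f) ∧ (∀ x : S, x ^ p ≠ g)))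
    {ω μ : K} (hω : ω ^ p = algebraMap S K f) (hμ : μ ^ p = algebraMap S K g)
    (hKgen : Algebra.adjoin L ({ω, μ} : Set K) = ⊤)
    (hdeg : Module.finrank L K = p ^ 2)
    (hicω : IsIntegrallyClosed (Algebra.adjoin S ({ω} : Set K)))
    (hicμ : IsIntegrallyClosed (Algebra.adjoin S ({μ} : Set K)))
    (hP : (Pid p ω μ h₁ h₂).IsPrime) :
    {x : K | ∀ z ∈ symbPow (Pid p ω μ h₁ h₂) hP (p - 1), x * (z : K) ∈ Algebra.adjoin S ({ω, μ} : Set K)} =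
      ↑(Submodule.span S
        ({x : K | ∃ i j : ℕ, i ≤ p - 1 ∧ j ≤ p - 1 ∧ i + j < p ∧
            x = (ω - algebraMap S K h₁) ^ i * (μ - algebraMap S K h₂) ^ j} ∪
         {x : K | ∃ i j : ℕ, i ≤ p - 1 ∧ j ≤ p - 1 ∧ p ≤ i + j ∧
            x = (p : K)⁻¹ * ((ω - algebraMap S K h₁) ^ i * (μ - algebraMap S K h₂) ^ j)})) := by
  exact stmt3_general hp hpS hf hg (.inl (not_dvd_of_isIntegrallyClosed_adjoin hp hpS hf hg hω hμ
    hKgen hdeg hicω)) hω hμ hKgen hdeg hP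
end

section
/- Assume S[ω] and S[μ] are integrally closed (i.e. f,g ∉ S^{p∧p²}), h₁ ≠ 0, h₂ ≠ 0, and fg ∈ S^{p∧p²}. Then R is contained in the A-submodule of K generated by {1} together with p^{−1}·((ω−h₁, μ−h₂)A)^{p−1}, i.e. R ⊆ A + p^{−1}·(ω−h₁, μ−h₂)^{p−1}A. -/
set_option synthInstance.maxHeartbeats 1000000
set_option maxHeartbeats 1600000

/-!
Write `A = S[ω, μ]`, `X = ω - h₁` and `Y = μ - h₂`. Then `A` is free over `S` on the monomials
`X ^ i * Y ^ j` with `i, j < p`, and `p` divides `X ^ p` and `Y ^ p`.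

Over the normal domain `S[ω]`, Euler's description of the trace dual of `S[ω][μ]` gives
`p * μ ^ (p - 1) * R ⊆ A`, so `p * g * R ⊆ A`; by symmetry `p * f * R ⊆ A`. Since `A` is free
over `S` and no height-one prime contains both `f` and `g`, in fact `p * R ⊆ A`.

If `i + j ≥ p` then `X ^ i * Y ^ j / p` is integral. So for `r ∈ R` and `w = p * r ∈ A`, every
product `w * X ^ (p - 1 - k) * Y ^ (p - 1 - l)` with `k + l < p - 1` lies in `p * (p * R) ⊆ p * A`.
Modulo `p`, its coefficient at `X ^ (p - 1) * Y ^ (p - 1)` is the coefficient of `w` at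
`X ^ k * Y ^ l`, which is therefore divisible by `p`; thus `w ∈ p * A + (X, Y) ^ (p - 1)`.
-/

open Polynomial

section HeightOne

variable {S L : Type*} [CommRing S] [IsDomain S] [IsNoetherianRing S] [IsIntegrallyClosed S]
  [Field L] [Algebra S L] [IsFractionRing S L] {P : Ideal S}

theorem exists_smul_eq_algebraMap_notMem_of_isAssociatedPrime
    (hP : IsAssociatedPrime P (L ⧸ (1 : Submodule S L))) :
    ∃ y : L, (∀ c ∈ P, c • y ∈ (1 : Submodule S L)) ∧
      ∃ q ∈ P, ∃ u ∉ P, algebraMap S L u = q • y := by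
  obtain ⟨hprime, y', hy'⟩ := isAssociatedPrime_iff.1 hP
  obtain ⟨y, rfl⟩ := Submodule.Quotient.mk_surjective _ y'
  have mem_iff (c : S) : c ∈ P ↔ c • y ∈ (1 : Submodule S L) := by
    rw [hy', Submodule.mem_colon_singleton, Submodule.mem_bot, ← Submodule.Quotient.mk_smul,
      Submodule.Quotient.mk_eq_zero]
  refine ⟨y, fun c hc ↦ (mem_iff c).1 hc, ?_⟩
  by_contra! hstable
  -- Now `P • y ⊆ P`, so `y` is integral and hence in `S`, which forces `P = ⊤`.
  have hbot : Submodule.map (Algebra.linearMap S L) P ≠ ⊥ := by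
    obtain ⟨a, s, hs, rfl⟩ := IsFractionRing.div_surjective (A := S) y
    have hs0 : algebraMap S L s ≠ 0 := by simpa using nonZeroDivisors.ne_zero hs
    have hsP : s ∈ P := (mem_iff s).2 (Submodule.mem_one.2
      ⟨a, by rw [Algebra.smul_def, mul_div_cancel₀ _ hs0]⟩)
    exact fun h ↦ hs0 ((Submodule.mem_bot S).1 (h ▸ Submodule.mem_map_of_mem hsP))
  have hint : IsIntegral S y := by
    refine isIntegral_of_smul_mem_submodule (Submodule.map (Algebra.linearMap S L) P) hbot
      ((IsNoetherian.noetherian P).map _) y ?_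
    rintro _ ⟨c, hc, rfl⟩
    obtain ⟨d, hd⟩ := Submodule.mem_one.1 ((mem_iff c).1 hc)
    refine ⟨d, not_not.1 fun hdP ↦ hstable c hc d hdP hd, ?_⟩
    rw [Algebra.linearMap_apply, Algebra.linearMap_apply, hd, smul_eq_mul, mul_comm,
      Algebra.smul_def]
  obtain ⟨d, hd⟩ := IsIntegrallyClosed.isIntegral_iff.1 hint
  exact hprime.one_notMem ((mem_iff 1).2 (Submodule.mem_one.2 ⟨d, by rw [hd, one_smul]⟩))

theorem isHeightOnePrime_of_isAssociatedPrime
    (hP : IsAssociatedPrime P (L ⧸ (1 : Submodule S L))) : IsHeightOnePrime P := by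
  -- As `y = u / q`, the ideal `P` becomes principal, generated by `q`, after inverting `u ∉ P`.
  obtain ⟨y, hy, q, hq, u, hu, hqy⟩ := exists_smul_eq_algebraMap_notMem_of_isAssociatedPrime hP
  have hprime := hP.isPrime
  have hinj := IsFractionRing.injective S L
  have hq0 : q ≠ 0 := by
    rintro rfl
    exact hu (by simp [hinj (hqy.trans (by simp) : algebraMap S L u = algebraMap S L 0)])
  refine ⟨hprime, ?_⟩
  rw [← PrimeSpectrum.height_eq_orderHeight]
  apply le_antisymm
  · refine Ideal.height_le_one_of_isPrincipal_of_mem_minimalPrimes (Ideal.span {q}) P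
      ⟨⟨hprime, (Ideal.span_singleton_le_iff_mem P).2 hq⟩, fun Q ⟨hQ, hqQ⟩ hQP c hc ↦ ?_⟩
    obtain ⟨d, hd⟩ := Submodule.mem_one.1 (hy c hc)
    have huc : u * c = q * d := hinj <| by
      simp only [map_mul, hqy, hd, Algebra.smul_def]
      ring
    have hucQ : u * c ∈ Q :=
      huc ▸ Q.mul_mem_right _ ((Ideal.span_singleton_le_iff_mem Q).1 hqQ)
    exact (hQ.mem_or_mem hucQ).resolve_left fun h ↦ hu (hQP h)
  · rw [Order.one_le_iff_ne_zero, Ne, Ideal.height_eq_zero_iff_eq_bot]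
    exact fun h ↦ hq0 ((Submodule.mem_bot S).1 (h ▸ hq))

theorem SatisfiesA1.mem_one_of_smul_mem {f g : S} (h : SatisfiesA1 f g) {x : L}
    (hf : f • x ∈ (1 : Submodule S L)) (hg : g • x ∈ (1 : Submodule S L)) :
    x ∈ (1 : Submodule S L) := by
  by_contra hx
  obtain ⟨P, hP, hle⟩ := exists_le_isAssociatedPrime_of_isNoetherianRing S
    (Submodule.Quotient.mk x : L ⧸ (1 : Submodule S L)) (by simpa using hx)
  have mem_of_smul_mem {c : S} (hc : c • x ∈ (1 : Submodule S L)) : c ∈ P :=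
    hle (by simpa [Submodule.mem_colon_singleton, ← Submodule.Quotient.mk_smul] using hc)
  exact h P (isHeightOnePrime_of_isAssociatedPrime hP)
    ⟨mem_of_smul_mem hf, mem_of_smul_mem hg⟩

theorem SatisfiesA1.mem_span_range_of_smul_mem {f g : S} (h : SatisfiesA1 f g) {ι M : Type*}
    [AddCommGroup M] [Module L M] [Module S M] [IsScalarTower S L M] (b : Module.Basis ι L M)
    {x : M} (hf : f • x ∈ Submodule.span S (Set.range b))
    (hg : g • x ∈ Submodule.span S (Set.range b)) : x ∈ Submodule.span S (Set.range b) := by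
  have repr_smul (c : S) (i : ι) : b.repr (c • x) i = c • b.repr x i := by
    rw [← algebraMap_smul L c x, map_smul, Finsupp.smul_apply, algebraMap_smul]
  simp only [b.mem_span_iff_repr_mem S, repr_smul] at hf hg ⊢
  exact fun i ↦ Submodule.mem_one.1
    (h.mem_one_of_smul_mem (Submodule.mem_one.2 (hf i)) (Submodule.mem_one.2 (hg i)))

end HeightOne

theorem satisfiesA1_of_isUnit_left {S : Type*} [CommRing S] {f : S} (hf : IsUnit f) (g : S) :
    SatisfiesA1 f g :=
  fun _ ⟨hP, _⟩ ⟨hfP, _⟩ ↦ hP.ne_top (Ideal.eq_top_of_isUnit_mem _ hfP hf)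

section Euler

theorem aeval_derivative_minpoly_mul_mem_adjoin (A F : Type*) {K : Type*} [CommRing A] [IsDomain A]
    [IsIntegrallyClosed A] [Field F] [Algebra A F] [IsFractionRing A F] [Field K] [Algebra F K]
    [Algebra A K] [IsScalarTower A F K] {x z : K} (hx : Algebra.adjoin F {x} = ⊤)
    (hxint : IsIntegral A x) (hz : IsIntegral A z) :
    aeval x (derivative (minpoly F x)) * z ∈ Algebra.adjoin A {x} := by
  have hxF : IsIntegral F x := hxint.tower_top
  by_cases hsep : IsSeparable F x
  · let e : IntermediateField.adjoin F {x} ≃ₐ[F] K :=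
      (IntermediateField.equivOfEq (IntermediateField.adjoin_eq_top_of_algebra F {x} hx)).trans
        IntermediateField.topEquiv
    have := IntermediateField.adjoin.finiteDimensional hxF
    have : FiniteDimensional F K := e.toLinearEquiv.finiteDimensional
    have := (IntermediateField.isSeparable_adjoin_simple_iff_isSeparable F K).2 hsep
    have : Algebra.IsSeparable F K := AlgEquiv.Algebra.isSeparable e
    have hne : aeval x (derivative (minpoly F x)) ≠ 0 :=
      Separable.aeval_derivative_ne_zero hsep (minpoly.aeval F x)
    have hdual : z ∈ (Algebra.traceForm F K).dualSubmodule
        (Subalgebra.toSubmodule (Algebra.adjoin A {x})) := by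
      intro y hy
      have hyint : IsIntegral A y := adjoin_le_integralClosure hxint hy
      exact Submodule.mem_one.2 (IsIntegrallyClosed.isIntegral_iff.1
        (Algebra.isIntegral_trace (L := F) (hz.mul hyint)))
    rwa [traceForm_dualSubmodule_adjoin A F hx hxint,
      Submodule.mem_smul_iff_inv_mul_mem (inv_ne_zero hne), inv_inv] at hdual
  · have hder : derivative (minpoly F x) = 0 := not_ne_iff.1 fun h ↦
      hsep ((separable_iff_derivative_ne_zero (minpoly.irreducible hxF)).2 h)
    simp [hder]

theorem aeval_derivative_mul_mem_adjoin (A F : Type*) {K : Type*} [CommRing A] [IsDomain A]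
    [IsIntegrallyClosed A] [Field F] [Algebra A F] [IsFractionRing A F] [Field K] [Algebra F K]
    [Algebra A K] [IsScalarTower A F K] {x z : K} (hx : Algebra.adjoin F {x} = ⊤) {P : A[X]}
    (hP : P.Monic) (hPx : aeval x P = 0) (hz : IsIntegral A z) :
    aeval x (derivative P) * z ∈ Algebra.adjoin A {x} := by
  have : Module.IsTorsionFree A K := .trans_faithfulSMul A F K
  have hxint : IsIntegral A x := ⟨P, hP, hPx⟩
  obtain ⟨Q, rfl⟩ := minpoly.isIntegrallyClosed_dvd hxint hPx
  have key := aeval_derivative_minpoly_mul_mem_adjoin A F hx hxint hz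
  rw [minpoly.isIntegrallyClosed_eq_field_fractions' F hxint, derivative_map, aeval_map_algebraMap]
    at key
  have hQ : aeval x Q ∈ Algebra.adjoin A {x} := aeval_mem_adjoin_singleton A x
  rw [derivative_mul, map_add, map_mul, map_mul, minpoly.aeval, zero_mul, add_zero, mul_right_comm]
  exact mul_mem key hQ

variable {S L K : Type*} [CommRing S] [IsDomain S] [Field L] [Algebra S L] [IsFractionRing S L]
  [Field K] [Algebra L K] [Algebra S K] [IsScalarTower S L K] {s : Set K}

theorem adjoin_eq_top_of_adjoin_union_eq_top (F : Type*) [Field F]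
    [Algebra (Algebra.adjoin S s) F] [Algebra F K] [IsScalarTower (Algebra.adjoin S s) F K]
    {t : Set K} (h : Algebra.adjoin L (s ∪ t) = ⊤) : Algebra.adjoin F t = ⊤ := by
  let A := Algebra.adjoin S s
  refine eq_top_iff.2 fun z _ ↦ ?_
  obtain ⟨c, hc⟩ := multiple_mem_adjoin_of_mem_localization_adjoin (nonZeroDivisors S) L
    (s ∪ t) z (h ▸ Algebra.mem_top)
  have hle : Algebra.adjoin A t ≤ (Algebra.adjoin F t).restrictScalars A :=
    Algebra.adjoin_le Algebra.subset_adjoin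
  rw [Algebra.adjoin_union_eq_adjoin_adjoin] at hc
  have hcz : algebraMap A F (algebraMap S A c) • z ∈ Algebra.adjoin F t := by
    rw [algebraMap_smul, algebraMap_smul]
    exact hle hc
  have hc0 : algebraMap A F (algebraMap S A c) ≠ 0 := by
    have hcL : algebraMap S L c ≠ 0 := by simp
    refine fun h0 ↦ hcL ((algebraMap L K).injective ?_)
    rw [← IsScalarTower.algebraMap_apply, IsScalarTower.algebraMap_apply S A K,
      IsScalarTower.algebraMap_apply A F K, h0, map_zero, map_zero]
  exact ((Algebra.adjoin F t).toSubmodule.smul_mem_iff hc0).1 hcz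

theorem aeval_derivative_mul_mem_adjoin_union {y r : K}
    (hic : IsIntegrallyClosed (Algebra.adjoin S s))
    (hgen : Algebra.adjoin L (s ∪ {y}) = ⊤) {P : (Algebra.adjoin S s)[X]} (hP : P.Monic)
    (hPy : aeval y P = 0) (hr : IsIntegral S r) :
    aeval y (derivative P) * r ∈ Algebra.adjoin S (s ∪ {y}) := by
  let A := Algebra.adjoin S s
  let := FractionRing.liftAlgebra A K
  have := FractionRing.isScalarTower_liftAlgebra A K
  rw [Algebra.adjoin_union_eq_adjoin_adjoin]
  exact aeval_derivative_mul_mem_adjoin A (FractionRing A)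
    (adjoin_eq_top_of_adjoin_union_eq_top (S := S) (FractionRing A) hgen) hP hPy hr.tower_top

theorem smul_natCast_mul_mem_adjoin_pair {x y r : K} {n : ℕ} (hn : 0 < n) {c : S}
    (hic : IsIntegrallyClosed (Algebra.adjoin S {x})) (hgen : Algebra.adjoin L {x, y} = ⊤)
    (hy : y ^ n = algebraMap S K c) (hr : IsIntegral S r) :
    c • (n * r) ∈ Algebra.adjoin S {x, y} := by
  have key := aeval_derivative_mul_mem_adjoin_union (P := X ^ n - C (algebraMap S _ c)) hic hgen
    (monic_X_pow_sub_C _ hn.ne') (by simp [hy, ← IsScalarTower.algebraMap_apply]) hr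
  have hder : aeval y (derivative (X ^ n - C (algebraMap S (Algebra.adjoin S {x}) c))) =
      n * y ^ (n - 1) := by simp [derivative_X_pow]
  have hymem : y ∈ Algebra.adjoin S {x, y} := Algebra.subset_adjoin (by simp)
  have hmul : c • (n * r) = y * (n * y ^ (n - 1) * r) := by
    rw [Algebra.smul_def, ← hy, ← mul_pow_sub_one hn.ne' y]
    ring
  exact hmul ▸ mul_mem hymem (hder ▸ key)

end Euler

section MonomialBasis

variable {S A : Type*} [CommRing S] [CommRing A] [Algebra S A]

theorem dvd_repr_of_algebraMap_dvd {ι : Type*} (b : Module.Basis ι S A) {c : S} {w : A}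
    (h : algebraMap S A c ∣ w) (i : ι) : c ∣ b.repr w i := by
  obtain ⟨v, rfl⟩ := h
  exact ⟨b.repr v i, by rw [← Algebra.smul_def, map_smul, Finsupp.smul_apply, smul_eq_mul]⟩

variable {m n : ℕ} {b : Module.Basis (Fin m × Fin n) S A} {x y : A} {c : S}

theorem mk_repr_pow_mul_pow (hb : ∀ i j, b (i, j) = x ^ (i : ℕ) * y ^ (j : ℕ))
    (hx : algebraMap S A c ∣ x ^ m) (hy : algebraMap S A c ∣ y ^ n) (i j : ℕ) (k : Fin m)
    (l : Fin n) :
    Ideal.Quotient.mk (Ideal.span {c}) (b.repr (x ^ i * y ^ j) (k, l)) =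
      if i = k ∧ j = l then 1 else 0 := by
  by_cases hij : i < m ∧ j < n
  · rw [← hb ⟨i, hij.1⟩ ⟨j, hij.2⟩, b.repr_self, Finsupp.single_apply,
      apply_ite (Ideal.Quotient.mk _), map_one, map_zero]
    simp only [Prod.mk.injEq, Fin.ext_iff]
  · have hdvd : algebraMap S A c ∣ x ^ i * y ^ j := by
      rcases not_and_or.1 hij with hi | hj
      · exact (hx.trans (pow_dvd_pow x (not_lt.1 hi))).mul_right _
      · exact (hy.trans (pow_dvd_pow y (not_lt.1 hj))).mul_left _
    rw [if_neg (by rintro ⟨rfl, rfl⟩; exact hij ⟨k.isLt, l.isLt⟩),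
      Ideal.Quotient.eq_zero_iff_mem, Ideal.mem_span_singleton]
    exact dvd_repr_of_algebraMap_dvd b hdvd _

theorem dvd_repr_of_algebraMap_dvd_mul_pow_mul_pow
    (hb : ∀ i j, b (i, j) = x ^ (i : ℕ) * y ^ (j : ℕ)) (hx : algebraMap S A c ∣ x ^ m)
    (hy : algebraMap S A c ∣ y ^ n) {k : Fin m} {l : Fin n} {w : A}
    (hw : algebraMap S A c ∣ w * (x ^ (k.rev : ℕ) * y ^ (l.rev : ℕ))) : c ∣ b.repr w (k, l) := by
  let top : Fin m × Fin n :=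
    (⟨m - 1, Nat.sub_one_lt_of_lt k.isLt⟩, ⟨n - 1, Nat.sub_one_lt_of_lt l.isLt⟩)
  let π := (Ideal.Quotient.mkₐ S (Ideal.span {c})).toLinearMap
  have hcoord : π ∘ₗ b.coord top ∘ₗ LinearMap.mulRight S (x ^ (k.rev : ℕ) * y ^ (l.rev : ℕ)) =
      π ∘ₗ b.coord (k, l) := by
    refine b.ext fun (i, j) ↦ ?_
    have hmul : b (i, j) * (x ^ (k.rev : ℕ) * y ^ (l.rev : ℕ)) =
        x ^ (i + k.rev : ℕ) * y ^ (j + l.rev : ℕ) := by rw [hb]; ring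
    have htop : (i + k.rev : ℕ) = m - 1 ∧ (j + l.rev : ℕ) = n - 1 ↔ (i : ℕ) = k ∧ (j : ℕ) = l := by
      simp only [Fin.val_rev]
      omega
    calc Ideal.Quotient.mk _ (b.repr (b (i, j) * (x ^ (k.rev : ℕ) * y ^ (l.rev : ℕ))) top)
        = if (i : ℕ) = k ∧ (j : ℕ) = l then 1 else 0 := by
          rw [hmul, mk_repr_pow_mul_pow hb hx hy]
          exact if_congr htop rfl rfl
      _ = Ideal.Quotient.mk _ (b.repr (b (i, j)) (k, l)) := by
          rw [hb, mk_repr_pow_mul_pow hb hx hy]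
  rw [← Ideal.mem_span_singleton, ← Ideal.Quotient.eq_zero_iff_mem]
  refine (LinearMap.congr_fun hcoord w).symm.trans (Ideal.Quotient.eq_zero_iff_mem.2 ?_)
  exact Ideal.mem_span_singleton.2 (dvd_repr_of_algebraMap_dvd b hw top)

theorem mem_span_algebraMap_sup_span_pair_pow
    (hb : ∀ i j, b (i, j) = x ^ (i : ℕ) * y ^ (j : ℕ)) (hx : algebraMap S A c ∣ x ^ m)
    (hy : algebraMap S A c ∣ y ^ n) {w : A} {d : ℕ}
    (hw : ∀ (k : Fin m) (l : Fin n), (k + l : ℕ) < d →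
      algebraMap S A c ∣ w * (x ^ (k.rev : ℕ) * y ^ (l.rev : ℕ))) :
    w ∈ Ideal.span {algebraMap S A c} ⊔ Ideal.span {x, y} ^ d := by
  rw [← b.sum_repr w]
  refine sum_mem fun (k, l) _ ↦ ?_
  by_cases hkl : (k + l : ℕ) < d
  · have hdvd := dvd_repr_of_algebraMap_dvd_mul_pow_mul_pow hb hx hy (hw k l hkl)
    refine Ideal.mem_sup_left (Ideal.mem_span_singleton.2 ?_)
    rw [Algebra.smul_def]
    exact ((algebraMap S A).map_dvd hdvd).mul_right _
  · have hpow : x ^ (k : ℕ) * y ^ (l : ℕ) ∈ Ideal.span {x, y} ^ (k + l : ℕ) := by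
      rw [pow_add]
      exact Ideal.mul_mem_mul (Ideal.pow_mem_pow (Ideal.subset_span (by simp)) _)
        (Ideal.pow_mem_pow (Ideal.subset_span (by simp)) _)
    rw [hb, Algebra.smul_def]
    exact Ideal.mem_sup_right (Ideal.mul_mem_left _ _ (Ideal.pow_le_pow_right (not_lt.1 hkl) hpow))

end MonomialBasis

section AdjoinPair

variable {R A : Type*} [CommRing R] [CommRing A] [Algebra R A]

theorem adjoin_pair_sub_algebraMap_s9 (x y : A) (a b : R) :
    Algebra.adjoin R {x - algebraMap R A a, y - algebraMap R A b} = Algebra.adjoin R {x, y} := by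
  refine le_antisymm (Algebra.adjoin_le (Set.pair_subset ?_ ?_))
    (Algebra.adjoin_le (Set.pair_subset ?_ ?_))
  · exact sub_mem (Algebra.subset_adjoin (by simp)) (algebraMap_mem _ a)
  · exact sub_mem (Algebra.subset_adjoin (by simp)) (algebraMap_mem _ b)
  · rw [← sub_add_cancel x (algebraMap R A a)]
    exact add_mem (Algebra.subset_adjoin (by simp)) (algebraMap_mem _ a)
  · rw [← sub_add_cancel y (algebraMap R A b)]
    exact add_mem (Algebra.subset_adjoin (by simp)) (algebraMap_mem _ b)

theorem span_range_pow_natDegree_eq_adjoin {x : A} {P : R[X]} (hP : P.Monic) (hPx : aeval x P = 0) :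
    Submodule.span R (Set.range fun i : Fin P.natDegree ↦ x ^ (i : ℕ)) =
      Subalgebra.toSubmodule (Algebra.adjoin R {x}) := by
  classical
  rw [← Submodule.span_range_natDegree_eq_adjoin hP hPx]
  congr 1
  ext z
  simp [Fin.exists_iff]

theorem span_range_pow_mul_pow_eq_adjoin_pair {x y : A} {P Q : R[X]} (hP : P.Monic)
    (hQ : Q.Monic) (hPx : aeval x P = 0) (hQy : aeval y Q = 0) :
    Submodule.span R (Set.range fun ij : Fin P.natDegree × Fin Q.natDegree ↦
      x ^ (ij.1 : ℕ) * y ^ (ij.2 : ℕ)) = Subalgebra.toSubmodule (Algebra.adjoin R {x, y}) := by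
  rw [Set.insert_eq, Algebra.adjoin_union_coe_submodule,
    ← span_range_pow_natDegree_eq_adjoin hP hPx, ← span_range_pow_natDegree_eq_adjoin hQ hQy,
    Submodule.span_mul_span]
  congr 1
  ext z
  simp [Set.mem_mul]

end AdjoinPair

theorem exists_basis_pow_mul_pow_span_eq_adjoin {S L K : Type*} [CommRing S] [Field L] [Algebra S L]
    [Field K] [Algebra L K] [Algebra S K] [IsScalarTower S L K] {x y : K} {P Q : S[X]} {m n : ℕ}
    (hP : P.Monic) (hQ : Q.Monic) (hPm : P.natDegree = m) (hQn : Q.natDegree = n)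
    (hPx : aeval x P = 0) (hQy : aeval y Q = 0) (hgen : Algebra.adjoin L {x, y} = ⊤)
    (hdeg : Module.finrank L K = m * n) :
    ∃ B : Module.Basis (Fin m × Fin n) L K, (∀ ij, B ij = x ^ (ij.1 : ℕ) * y ^ (ij.2 : ℕ)) ∧
      Submodule.span S (Set.range B) = Subalgebra.toSubmodule (Algebra.adjoin S {x, y}) := by
  subst hPm hQn
  have hspan := span_range_pow_mul_pow_eq_adjoin_pair (hP.map (algebraMap S L))
    (hQ.map (algebraMap S L)) (x := x) (y := y) (by rwa [aeval_map_algebraMap])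
    (by rwa [aeval_map_algebraMap])
  rw [hP.natDegree_map, hQ.natDegree_map, hgen, Algebra.top_toSubmodule] at hspan
  have hB := coe_basisOfTopLeSpanOfCardEqFinrank _ hspan.ge (by simp [hdeg])
  refine ⟨_, congrFun hB, ?_⟩
  rw [hB, span_range_pow_mul_pow_eq_adjoin_pair hP hQ hPx hQy]

section Conductor

variable {S L K : Type*} [CommRing S] [IsDomain S] [Field L] [Algebra S L] [IsFractionRing S L]
  [Field K] [Algebra L K] [Algebra S K] [IsScalarTower S L K] {n : ℕ} {f g : S} {x y : K}

theorem natCast_mul_mem_adjoin_pair [IsNoetherianRing S] [IsIntegrallyClosed S] (hn : 0 < n)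
    (hfg : SatisfiesA1 f g) (hx : x ^ n = algebraMap S K f) (hy : y ^ n = algebraMap S K g)
    (hgen : Algebra.adjoin L {x, y} = ⊤) (hdeg : Module.finrank L K = n ^ 2)
    (hicx : IsIntegrallyClosed (Algebra.adjoin S {x}))
    (hicy : IsIntegrallyClosed (Algebra.adjoin S {y})) {r : K} (hr : IsIntegral S r) :
    n * r ∈ Algebra.adjoin S {x, y} := by
  have hgen' : Algebra.adjoin L {y, x} = ⊤ := by rwa [Set.pair_comm]
  obtain ⟨B, -, hB⟩ := exists_basis_pow_mul_pow_span_eq_adjoin (S := S) (m := n) (n := n)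
    (monic_X_pow_sub_C f hn.ne') (monic_X_pow_sub_C g hn.ne') natDegree_X_pow_sub_C
    natDegree_X_pow_sub_C (by simp [hx]) (by simp [hy]) hgen (by rw [hdeg, sq])
  have hg := smul_natCast_mul_mem_adjoin_pair hn hicx hgen hy hr
  have hf := smul_natCast_mul_mem_adjoin_pair hn hicy hgen' hx hr
  rw [Set.pair_comm] at hf
  rw [← Subalgebra.mem_toSubmodule, ← hB] at hf hg ⊢
  exact hfg.mem_span_range_of_smul_mem B hf hg

theorem exists_basis_adjoin_pair_sub (hn : 0 < n) (h₁ h₂ : S)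
    (hx : x ^ n = algebraMap S K f) (hy : y ^ n = algebraMap S K g)
    (hgen : Algebra.adjoin L {x, y} = ⊤) (hdeg : Module.finrank L K = n ^ 2) :
    ∃ b : Module.Basis (Fin n × Fin n) S (Algebra.adjoin S {x, y}), ∀ i j,
      b (i, j) = (omegaA x y - algebraMap S _ h₁) ^ (i : ℕ) *
        (muA x y - algebraMap S _ h₂) ^ (j : ℕ) := by
  have hmonic (c h : S) : ((X ^ n - C c).comp (X + C h)).Monic :=
    (monic_X_pow_sub_C c hn.ne').comp (monic_X_add_C h) (by simp)
  have hnat (c h : S) : ((X ^ n - C c).comp (X + C h)).natDegree = n := by simp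
  have hgen' : Algebra.adjoin L {x - algebraMap S K h₁, y - algebraMap S K h₂} = ⊤ := by
    rw [IsScalarTower.algebraMap_apply S L K, IsScalarTower.algebraMap_apply S L K,
      adjoin_pair_sub_algebraMap_s9, hgen]
  obtain ⟨B, hB, hspan⟩ := exists_basis_pow_mul_pow_span_eq_adjoin (hmonic f h₁) (hmonic g h₂)
    (hnat f h₁) (hnat g h₂) (by simp [hx]) (by simp [hy]) hgen'
    (by rw [hdeg, sq])
  rw [adjoin_pair_sub_algebraMap_s9] at hspan
  refine ⟨(B.restrictScalars S).map (LinearEquiv.ofEq _ _ hspan), fun i j ↦ Subtype.ext ?_⟩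
  rw [Module.Basis.map_apply, LinearEquiv.coe_ofEq_apply, Module.Basis.restrictScalars_apply, hB]
  simp [omegaA, muA]

end Conductor

theorem natCast_dvd_sub_pow {A : Type*} [CommRing A] {p : ℕ} (hp : p.Prime) {x y : A}
    (h : (p : A) ∣ x ^ p - y ^ p) : (p : A) ∣ (x - y) ^ p := by
  obtain ⟨r, hr⟩ := exists_add_pow_prime_eq hp (x - y) y
  have hsub : (x - y) ^ p = x ^ p - y ^ p - p * ((x - y) * y * r) := by
    rw [sub_add_cancel] at hr
    rw [hr]
    ring
  exact hsub ▸ dvd_sub h (dvd_mul_right _ _)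

theorem isIntegral_pow_mul_pow_div {S K : Type*} [CommRing S] [Field K] [Algebra S K]
    {x y c α β : K} {n i j : ℕ} (hn : 0 < n) (hij : n ≤ i + j) (hx : x ^ n = c * α)
    (hy : y ^ n = c * β) (hc : IsIntegral S c) (hα : IsIntegral S α) (hβ : IsIntegral S β) :
    IsIntegral S (x ^ i * y ^ j / c) := by
  rcases eq_or_ne c 0 with rfl | hc0
  · simpa using isIntegral_zero
  refine .of_pow hn ?_
  have hpow : (x ^ i * y ^ j / c) ^ n = c ^ (i + j - n) * α ^ i * β ^ j :=
    calc (x ^ i * y ^ j / c) ^ n = (x ^ n) ^ i * (y ^ n) ^ j / c ^ n := by ring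
      _ = c ^ (i + j - n + n) * α ^ i * β ^ j / c ^ n := by
        rw [hx, hy, Nat.sub_add_cancel hij]
        ring
      _ = c ^ (i + j - n) * α ^ i * β ^ j := by
        rw [pow_add]
        field_simp
  exact hpow ▸ ((hc.pow _).mul (hα.pow _)).mul (hβ.pow _)

theorem exists_eq_add_inv_mul_of_isIntegral {S K : Type*} [CommRing S] [Field K] [Algebra S K]
    {A : Subalgebra S K} {n : ℕ} {b : Module.Basis (Fin n × Fin n) S A} {x y : A} {c : S}
    (hb : ∀ i j, b (i, j) = x ^ (i : ℕ) * y ^ (j : ℕ)) (hx : algebraMap S A c ∣ x ^ n)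
    (hy : algebraMap S A c ∣ y ^ n) (hc : algebraMap S K c ≠ 0)
    (hcA : ∀ s : K, IsIntegral S s → algebraMap S K c * s ∈ A) {r : K} (hr : IsIntegral S r) :
    ∃ u : A, ∃ z ∈ Ideal.span {x, y} ^ (n - 1), r = u + (algebraMap S K c)⁻¹ * z := by
  have := Module.Finite.of_basis b
  have hint (v : A) : IsIntegral S (v : K) := (Algebra.IsIntegral.isIntegral v).map A.val
  obtain ⟨α, hα⟩ := hx
  obtain ⟨β, hβ⟩ := hy
  let w : A := ⟨algebraMap S K c * r, hcA r hr⟩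
  have hw : w ∈ Ideal.span {algebraMap S A c} ⊔ Ideal.span {x, y} ^ (n - 1) := by
    refine mem_span_algebraMap_sup_span_pair_pow hb (hα ▸ dvd_mul_right _ _)
      (hβ ▸ dvd_mul_right _ _) fun k l hkl ↦ ?_
    let t : K := (x : K) ^ (k.rev : ℕ) * (y : K) ^ (l.rev : ℕ) / algebraMap S K c
    have ht : IsIntegral S t :=
      isIntegral_pow_mul_pow_div k.pos (by simp only [Fin.val_rev]; omega)
        (congrArg Subtype.val hα) (congrArg Subtype.val hβ) isIntegral_algebraMap (hint α) (hint β)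
    refine ⟨⟨algebraMap S K c * (r * t), hcA _ (hr.mul ht)⟩, Subtype.ext ?_⟩
    change algebraMap S K c * r * (x ^ (k.rev : ℕ) * y ^ (l.rev : ℕ)) =
      algebraMap S K c * (algebraMap S K c * (r * t))
    simp only [t]
    field_simp
  obtain ⟨_, hv, z, hz, hvz⟩ := Submodule.mem_sup.1 hw
  obtain ⟨u, rfl⟩ := Ideal.mem_span_singleton.1 hv
  have hK : algebraMap S K c * u + z = algebraMap S K c * r := congrArg Subtype.val hvz
  exact ⟨u, z, hz, by rw [← mul_right_inj' hc, mul_add, mul_inv_cancel_left₀ hc, hK]⟩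

theorem stmt9_general
    {S : Type*} [CommRing S] [IsDomain S] [IsNoetherianRing S] [IsIntegrallyClosed S]
    {L : Type*} [Field L] [Algebra S L] [IsFractionRing S L]
    {K : Type*} [Field K] [Algebra L K] [Algebra S K] [IsScalarTower S L K]
    {p : ℕ} (hp : p.Prime) (hp0 : (p : S) ≠ 0)
    {f g h₁ h₂ a b : S} (hf : f = h₁ ^ p + a * (p : S)) (hg : g = h₂ ^ p + b * (p : S))
    (hfg : SatisfiesA1 f g)
    {ω μ : K} (hω : ω ^ p = algebraMap S K f) (hμ : μ ^ p = algebraMap S K g)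
    (hKgen : Algebra.adjoin L ({ω, μ} : Set K) = ⊤)
    (hdeg : Module.finrank L K = p ^ 2)
    (hicω : IsIntegrallyClosed (Algebra.adjoin S ({ω} : Set K)))
    (hicμ : IsIntegrallyClosed (Algebra.adjoin S ({μ} : Set K))) :
    (integralClosure S K : Set K) ⊆
      {x : K | ∃ u : Algebra.adjoin S ({ω, μ} : Set K),
        ∃ z ∈ (Ideal.span {omegaA ω μ - algebraMap S _ h₁,
            muA ω μ - algebraMap S _ h₂} : Ideal (Algebra.adjoin S ({ω, μ} : Set K))) ^ (p - 1),
          x = (u : K) + (p : K)⁻¹ * (z : K)} := by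
  intro r hr
  let A := Algebra.adjoin S ({ω, μ} : Set K)
  have hinj : Function.Injective (algebraMap S K) := by
    rw [IsScalarTower.algebraMap_eq S L K]
    exact (algebraMap L K).injective.comp (IsFractionRing.injective S L)
  have hω' : algebraMap S A p ∣ (omegaA ω μ - algebraMap S A h₁) ^ p := by
    rw [map_natCast]
    refine natCast_dvd_sub_pow hp ⟨algebraMap S A a, Subtype.ext ?_⟩
    simp [omegaA, hω, hf, mul_comm]
  have hμ' : algebraMap S A p ∣ (muA ω μ - algebraMap S A h₂) ^ p := by
    rw [map_natCast]
    refine natCast_dvd_sub_pow hp ⟨algebraMap S A b, Subtype.ext ?_⟩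
    simp [muA, hμ, hg, mul_comm]
  obtain ⟨B, hB⟩ := exists_basis_adjoin_pair_sub hp.pos h₁ h₂ hω hμ hKgen hdeg
  simpa using exists_eq_add_inv_mul_of_isIntegral hB hω' hμ' (by simpa using hinj.ne hp0)
    (by simpa using fun s ↦ natCast_mul_mem_adjoin_pair hp.pos hfg hω hμ hKgen hdeg hicω hicμ) hr

theorem stmt9
    {S : Type*} [CommRing S] [IsDomain S] [IsNoetherianRing S] [IsIntegrallyClosed S]
    {L : Type*} [Field L] [CharZero L] [Algebra S L] [IsFractionRing S L]
    {K : Type*} [Field K] [Algebra L K] [Algebra S K] [IsScalarTower S L K]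
    {p : ℕ} (hp : p.Prime) (hp3 : 3 ≤ p) (hpS : Prime ((p : ℕ) : S))
    (hSmodp : IsIntegrallyClosed (S ⧸ Ideal.span {((p : ℕ) : S)}))
    {f g h₁ h₂ a b : S} (hf : f = h₁ ^ p + a * (p : S)) (hg : g = h₂ ^ p + b * (p : S))
    (hfg : (¬IsUnit f ∧ ¬IsUnit g ∧ PaperSquarefree f ∧ PaperSquarefree g ∧ SatisfiesA1 f g) ∨
      (IsUnit f ∧ IsUnit g ∧ (∀ x : S, x ^ p ≠ f) ∧ (∀ x : S, x ^ p ≠ g)))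
    {ω μ : K} (hω : ω ^ p = algebraMap S K f) (hμ : μ ^ p = algebraMap S K g)
    (hKgen : Algebra.adjoin L ({ω, μ} : Set K) = ⊤)
    (hdeg : Module.finrank L K = p ^ 2)
    (hicω : IsIntegrallyClosed (Algebra.adjoin S ({ω} : Set K)))
    (hicμ : IsIntegrallyClosed (Algebra.adjoin S ({μ} : Set K)))
    (hh₁ : h₁ ≠ 0) (hh₂ : h₂ ≠ 0)
    (hfg1 : ∃ x y : S, f * g = x ^ p + y * (p : S) ^ 2) :
    (integralClosure S K : Set K) ⊆
      {x : K | ∃ u : Algebra.adjoin S ({ω, μ} : Set K),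
        ∃ z ∈ (Ideal.span {omegaA ω μ - algebraMap S _ h₁,
            muA ω μ - algebraMap S _ h₂} : Ideal (Algebra.adjoin S ({ω, μ} : Set K))) ^ (p - 1),
          x = (u : K) + (p : K)⁻¹ * (z : K)} := by
  exact stmt9_general hp hpS.ne_zero hf hg
    (hfg.elim (·.2.2.2.2) fun h ↦ satisfiesA1_of_isUnit_left h.1 g) hω hμ hKgen hdeg hicω hicμ
end
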